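/- Suppose the leading principal minors M_0, M_1, …, M_{N−2} of the heptadiagonal matrix A are all nonzero. Then the pivots μ_0, …, μ_{N−1} of the algorithm are well defined, μ_i ≠ 0 for all i ≤ N−2, and μ_{N−1} = det(A) / M_{N−2}. Consequently all pivots μ_0, …, μ_{N−1} are nonzero if and only if A is nonsingular (det(A) ≠ 0); i.e., nonsingularity of the coefficient matrix is the only requirement for the algorithm's pivots to be nonzero. -/

import Mathlib

/-!
The recursions defining `δ, ξ, μ, α, β, γ` are exactly the entrywise equations of the band
factorization `A = L U`, with `L = Lmat A δ ξ μ` lower triangular with diagonal `μ` and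
`U = Umat N α β γ` unit upper triangular. The equations for the entries on or below the diagonal
involve no division; those above the diagonal in row `i` need `μ i ≠ 0`. Hence if
`μ 0, …, μ (k - 1)` are nonzero, the leading block of size `k + 1` factors, whether or not `μ k`
vanishes, and `M_k = μ 0 * ⋯ * μ k` (`lpm_eq_prod`). By strong induction the nonvanishing of
`M_0, …, M_{N-2}` gives that of `μ 0, …, μ (N - 2)`; then `det A = M_{N-1} = M_{N-2} * μ (N - 1)`.
-/

open Matrix Finset

/-- The `(i, j)` entry of the `N × N` matrix `A`, at integer indices,
with the convention that out-of-range entries are `0`. -/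
def ent {K : Type*} [Field K] {N : ℕ} (A : Matrix (Fin N) (Fin N) K) (i j : ℤ) : K :=
  if h : 0 ≤ i ∧ i < (N : ℤ) ∧ 0 ≤ j ∧ j < (N : ℤ) then
    A ⟨i.toNat, by omega⟩ ⟨j.toNat, by omega⟩
  else 0

/-- The value of a vector `y ∈ K^N` at an integer index, with the convention
that out-of-range values are `0`. -/
def vent {K : Type*} [Field K] {N : ℕ} (y : Fin N → K) (i : ℤ) : K :=
  if h : 0 ≤ i ∧ i < (N : ℤ) then y ⟨i.toNat, by omega⟩ else 0

/-- `A` is heptadiagonal: entries vanish at distance `> 3` from the diagonal. -/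
def Heptadiagonal {K : Type*} [Field K] {N : ℕ} (A : Matrix (Fin N) (Fin N) K) : Prop :=
  ∀ i j : Fin N, 3 < |(i : ℤ) - (j : ℤ)| → A i j = 0

/-- The sequences `δ, ξ, μ, α, β, γ` of the symbolic algorithm for a heptadiagonal
matrix `A`, written with the subdiagonals `a*_i = A i (i-1)`, `b*_i = A i (i-2)`,
`c*_i = A i (i-3)`, the diagonal `d_i = A i i` and the superdiagonals
`a_i = A i (i+1)`, `b_i = A i (i+2)`, `c_i = A i (i+3)`.  All terms with negative
index are `0`. -/
def AlgSeqs {K : Type*} [Field K] {N : ℕ} (A : Matrix (Fin N) (Fin N) K)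
    (δ ξ μ α β γ : ℤ → K) : Prop :=
  (∀ i : ℤ, i < 0 → δ i = 0 ∧ ξ i = 0 ∧ μ i = 0 ∧ α i = 0 ∧ β i = 0 ∧ γ i = 0) ∧
  (∀ i : ℤ, 0 ≤ i → i < (N : ℤ) →
    δ i = ent A i (i - 1) - α (i - 2) * ent A i (i - 2)
        - ent A i (i - 3) * (β (i - 3) - α (i - 3) * α (i - 2)) ∧
    ξ i = ent A i (i - 2) - α (i - 3) * ent A i (i - 3) ∧
    μ i = ent A i i - α (i - 1) * δ i - β (i - 2) * ξ i - γ (i - 3) * ent A i (i - 3) ∧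
    α i = (ent A i (i + 1) - β (i - 1) * δ i - γ (i - 2) * ξ i) / μ i ∧
    β i = (ent A i (i + 2) - γ (i - 1) * δ i) / μ i ∧
    γ i = ent A i (i + 3) / μ i)

/-- The `k`-th leading principal minor of `A` : the determinant of the
`(k+1) × (k+1)` top-left submatrix. -/
def lpm {K : Type*} [Field K] {N : ℕ} (A : Matrix (Fin N) (Fin N) K) (k : ℕ)
    (hk : k + 1 ≤ N) : K :=
  (A.submatrix (Fin.castLE hk) (Fin.castLE hk)).det

/-- The `k`-th leading principal minor of `A`, defined as `0` out of range. -/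
def lpm' {K : Type*} [Field K] {N : ℕ} (A : Matrix (Fin N) (Fin N) K) (k : ℕ) : K :=
  if h : k + 1 ≤ N then lpm A k h else 0

/-- The lower triangular band factor `L` of the algorithm:
`L i i = μ i`, `L i (i-1) = δ i`, `L i (i-2) = ξ i`, `L i (i-3) = c*_i`. -/
def Lmat {K : Type*} [Field K] {N : ℕ} (A : Matrix (Fin N) (Fin N) K)
    (δ ξ μ : ℤ → K) : Matrix (Fin N) (Fin N) K :=
  Matrix.of fun i j : Fin N =>
    if (i : ℤ) = (j : ℤ) then μ (i : ℤ)
    else if (i : ℤ) = (j : ℤ) + 1 then δ (i : ℤ)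
    else if (i : ℤ) = (j : ℤ) + 2 then ξ (i : ℤ)
    else if (i : ℤ) = (j : ℤ) + 3 then ent A (i : ℤ) ((i : ℤ) - 3)
    else 0

/-- The unit upper triangular band factor `U` of the algorithm:
`U i i = 1`, `U i (i+1) = α i`, `U i (i+2) = β i`, `U i (i+3) = γ i`. -/
def Umat {K : Type*} [Field K] (N : ℕ) (α β γ : ℤ → K) : Matrix (Fin N) (Fin N) K :=
  Matrix.of fun i j : Fin N =>
    if (j : ℤ) = (i : ℤ) then 1
    else if (j : ℤ) = (i : ℤ) + 1 then α (i : ℤ)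
    else if (j : ℤ) = (i : ℤ) + 2 then β (i : ℤ)
    else if (j : ℤ) = (i : ℤ) + 3 then γ (i : ℤ)
    else 0

/-- The entries of `Umat`, extended to integer indices. -/
def bandU {K : Type*} [Field K] (α β γ : ℤ → K) (i j : ℤ) : K :=
  if j = i then 1
  else if j = i + 1 then α i
  else if j = i + 2 then β i
  else if j = i + 3 then γ i
  else 0

theorem bandU_of_neg {K : Type*} [Field K] {α β γ : ℤ → K}
    (h : ∀ i : ℤ, i < 0 → α i = 0 ∧ β i = 0 ∧ γ i = 0) {i j : ℤ} (hi : i < 0) (hj : 0 ≤ j) :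
    bandU α β γ i j = 0 := by
  obtain ⟨h1, h2, h3⟩ := h i hi
  have : j ≠ i := by omega
  simp [bandU, h1, h2, h3, this]

/-- A subdiagonal at distance `s` picks out one term of the sum; when `i - s` is negative no index
is hit, and the right-hand side vanishes by `hF`. -/
theorem sum_shift {K : Type*} [Field K] {n : ℕ} (i : Fin n) (s : ℤ) (hs : 0 ≤ s) (x : K)
    (F : ℤ → K) (hF : ∀ t : ℤ, t < 0 → F t = 0) :
    ∑ t : Fin n, (if (i : ℤ) = (t : ℤ) + s then x else 0) * F t = x * F ((i : ℤ) - s) := by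
  by_cases h : (i : ℤ) - s < 0
  · rw [hF _ h, mul_zero]
    refine Finset.sum_eq_zero fun t _ => ?_
    rw [if_neg (by omega), zero_mul]
  · have hi := i.isLt
    rw [Finset.sum_eq_single (⟨((i : ℤ) - s).toNat, by omega⟩ : Fin n)]
    · have e : ((((i : ℤ) - s).toNat : ℕ) : ℤ) = (i : ℤ) - s := by omega
      simp only [e]
      rw [if_pos (by omega)]
    · intro t _ ht
      rw [if_neg, zero_mul]
      intro h'
      apply ht
      ext
      simp only
      omega
    · simp

theorem ent_coe {K : Type*} [Field K] {N : ℕ} (A : Matrix (Fin N) (Fin N) K) (i j : Fin N) :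
    ent A i j = A i j := by
  have hi := i.isLt
  have hj := j.isLt
  rw [ent, dif_pos (by omega)]
  rfl

theorem ent_far {K : Type*} [Field K] {N : ℕ} {A : Matrix (Fin N) (Fin N) K}
    (hA : Heptadiagonal A) {i j : ℤ} (h : 3 < |i - j|) : ent A i j = 0 := by
  unfold ent
  split_ifs with h'
  · apply hA
    have e1 : ((i.toNat : ℕ) : ℤ) = i := by omega
    have e2 : ((j.toNat : ℕ) : ℤ) = j := by omega
    simpa only [e1, e2] using h
  · rfl

/-- The entry of `L U` in row `i`, column `j`, written as the four possibly nonzero terms, equals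
the entry of `A`. Nonvanishing of the pivot is only needed above the diagonal. -/
theorem band_identity {K : Type*} [Field K] {N : ℕ} {A : Matrix (Fin N) (Fin N) K}
    (hA : Heptadiagonal A) {δ ξ μ α β γ : ℤ → K} (hseq : AlgSeqs A δ ξ μ α β γ)
    {i j : ℤ} (hi : 0 ≤ i) (hiN : i < N) (hμ : i < j → μ i ≠ 0) :
    μ i * bandU α β γ i j + δ i * bandU α β γ (i - 1) j + ξ i * bandU α β γ (i - 2) j
      + ent A i (i - 3) * bandU α β γ (i - 3) j = ent A i j := by
  obtain ⟨e1, e2, e3, e4, e5, e6⟩ := hseq.2 i hi hiN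
  by_cases hfar : 3 < |i - j|
  · rw [ent_far hA hfar]
    have : j < i - 3 ∨ i + 3 < j := by
      rcases lt_abs.1 hfar with h | h <;> omega
    have hz : ∀ s : ℤ, 0 ≤ s → s ≤ 3 → bandU α β γ (i - s) j = 0 := by
      intro s hs hs'
      unfold bandU
      rw [if_neg (by omega), if_neg (by omega), if_neg (by omega), if_neg (by omega)]
    have h0 := hz 0 (by omega) (by omega)
    rw [sub_zero] at h0
    rw [h0, hz 1 (by omega) (by omega), hz 2 (by omega) (by omega), hz 3 (by omega) (by omega)]
    ring
  · have hb := abs_le.1 (not_lt.1 hfar)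
    obtain ⟨d, rfl⟩ : ∃ d, j = i + d := ⟨j - i, by ring⟩
    have hd1 : -3 ≤ d := by omega
    have hd2 : d ≤ 3 := by omega
    have hU : ∀ s : ℤ, bandU α β γ (i - s) (i + d) =
        if d + s = 0 then 1 else if d + s = 1 then α (i - s) else if d + s = 2 then β (i - s)
        else if d + s = 3 then γ (i - s) else 0 := by
      intro s
      unfold bandU
      congr 1
      · simp only [eq_iff_iff]; omega
      congr 1
      · simp only [eq_iff_iff]; omega
      congr 1
      · simp only [eq_iff_iff]; omega
      congr 1
      · simp only [eq_iff_iff]; omega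
    have h0 := hU 0
    rw [sub_zero] at h0
    rw [h0, hU 1, hU 2, hU 3]
    obtain rfl | rfl | rfl | rfl | rfl | rfl | rfl :
        d = -3 ∨ d = -2 ∨ d = -1 ∨ d = 0 ∨ d = 1 ∨ d = 2 ∨ d = 3 := by omega
    · norm_num [← sub_eq_add_neg]
    · norm_num [← sub_eq_add_neg]
      rw [e2]; ring
    · norm_num [← sub_eq_add_neg]
      rw [e1, e2]; ring
    · norm_num
      rw [e3]; ring
    · have := hμ (by omega)
      norm_num
      rw [e4]; field_simp; ring
    · have := hμ (by omega)
      norm_num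
      rw [e5]; field_simp; ring
    · have := hμ (by omega)
      norm_num
      rw [e6]; field_simp

theorem leading_factorization {K : Type*} [Field K] {N : ℕ} {A : Matrix (Fin N) (Fin N) K}
    (hA : Heptadiagonal A) {δ ξ μ α β γ : ℤ → K} (hseq : AlgSeqs A δ ξ μ α β γ)
    (k : ℕ) (hk : k + 1 ≤ N) (hμ : ∀ i : ℕ, i < k → μ i ≠ 0) :
    A.submatrix (Fin.castLE hk) (Fin.castLE hk) =
      (Lmat A δ ξ μ).submatrix (Fin.castLE hk) (Fin.castLE hk) * Umat (k + 1) α β γ := by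
  ext i j
  have hi := i.isLt
  have hj := j.isLt
  have hF : ∀ t : ℤ, t < 0 → bandU α β γ t j = 0 := fun t ht =>
    bandU_of_neg (fun i hi => (hseq.1 i hi).2.2.2) ht (by omega)
  have key := band_identity hA hseq (i := (i : ℤ)) (j := (j : ℤ)) (by omega) (by omega)
    (fun h => hμ i (by omega))
  have hent := ent_coe A (Fin.castLE hk i) (Fin.castLE hk j)
  simp only [Fin.val_castLE] at hent
  rw [Matrix.submatrix_apply, ← hent, ← key, Matrix.mul_apply]
  have s0 := sum_shift i 0 (by omega) (μ i) (fun t => bandU α β γ t j) hF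
  have s1 := sum_shift i 1 (by omega) (δ i) (fun t => bandU α β γ t j) hF
  have s2 := sum_shift i 2 (by omega) (ξ i) (fun t => bandU α β γ t j) hF
  have s3 := sum_shift i 3 (by omega) (ent A i (i - 3)) (fun t => bandU α β γ t j) hF
  simp only [sub_zero] at s0
  rw [← s0, ← s1, ← s2, ← s3, ← Finset.sum_add_distrib, ← Finset.sum_add_distrib,
    ← Finset.sum_add_distrib]
  refine Finset.sum_congr rfl fun t _ => ?_
  rw [← add_mul, ← add_mul, ← add_mul]
  congr 1
  simp only [Matrix.submatrix_apply, Lmat, Matrix.of_apply, Fin.val_castLE, add_zero]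
  split_ifs <;> first | omega | simp

/-- The leading minor is a product of pivots; the last pivot `μ k` is allowed to vanish. -/
theorem lpm_eq_prod {K : Type*} [Field K] {N : ℕ} {A : Matrix (Fin N) (Fin N) K}
    (hA : Heptadiagonal A) {δ ξ μ α β γ : ℤ → K} (hseq : AlgSeqs A δ ξ μ α β γ)
    (k : ℕ) (hk : k + 1 ≤ N) (hμ : ∀ i : ℕ, i < k → μ i ≠ 0) :
    lpm A k hk = ∏ i ∈ Finset.range (k + 1), μ (i : ℤ) := by
  rw [lpm, leading_factorization hA hseq k hk hμ, Matrix.det_mul,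
    Matrix.det_of_isLowerTriangular, Matrix.det_of_isUpperTriangular, ← Fin.prod_univ_eq_prod_range
      (fun i : ℕ => μ (i : ℤ))]
  · simp [Lmat, Umat]
  · intro i j hij
    simp only [id] at hij
    have : (j : ℕ) < i := hij
    simp only [Umat, Matrix.of_apply]
    rw [if_neg (by omega), if_neg (by omega), if_neg (by omega), if_neg (by omega)]
  · intro i j hij
    have : (i : ℕ) < j := OrderDual.toDual_lt_toDual.1 hij
    simp only [Matrix.submatrix_apply, Lmat, Matrix.of_apply, Fin.val_castLE]
    rw [if_neg (by omega), if_neg (by omega), if_neg (by omega), if_neg (by omega)]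

/-- if the leading principal minors `M_0, …, M_{N-2}` are all nonzero,
then the pivots `μ_0, …, μ_{N-2}` are nonzero, `μ_{N-1} = det A / M_{N-2}` (with
`M_{-1} = 1`), and all pivots are nonzero iff `A` is nonsingular. -/
theorem pivots_nonzero_iff_nonsingular {K : Type*} [Field K] {N : ℕ} (hN : 1 ≤ N)
    (A : Matrix (Fin N) (Fin N) K) (hA : Heptadiagonal A)
    (δ ξ μ α β γ : ℤ → K) (hseq : AlgSeqs A δ ξ μ α β γ)
    (hm : ∀ k : ℕ, k + 1 < N → lpm' A k ≠ 0) :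
    (∀ i : ℤ, 0 ≤ i → i ≤ (N : ℤ) - 2 → μ i ≠ 0) ∧
    μ ((N : ℤ) - 1) = A.det / (if N = 1 then 1 else lpm' A (N - 2)) ∧
    ((∀ i : ℤ, 0 ≤ i → i < (N : ℤ) → μ i ≠ 0) ↔ A.det ≠ 0) := by
  have hpiv : ∀ k : ℕ, k + 1 < N → μ (k : ℤ) ≠ 0 := by
    intro k
    induction k using Nat.strong_induction_on with
    | _ k ih =>
      intro hk
      have h := hm k hk
      rw [lpm', dif_pos hk.le, lpm_eq_prod hA hseq k hk.le (fun i hi => ih i hi (by omega)),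
        Finset.prod_range_succ] at h
      exact right_ne_zero_of_mul h
  obtain ⟨n, rfl⟩ : ∃ n, N = n + 1 := ⟨N - 1, by omega⟩
  have hdet : A.det = ∏ i ∈ Finset.range (n + 1), μ (i : ℤ) := by
    rw [← lpm_eq_prod hA hseq n le_rfl (fun i hi => hpiv i (by omega))]
    rfl
  have hprev : (if n + 1 = 1 then 1 else lpm' A (n + 1 - 2)) =
      ∏ i ∈ Finset.range n, μ (i : ℤ) := by
    rcases n with _ | m
    · simp
    · have e : m + 1 + 1 - 2 = m := by omega
      rw [if_neg (by omega), e, lpm', dif_pos (by omega),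
        lpm_eq_prod hA hseq m (by omega) (fun i hi => hpiv i (by omega))]
  have hprod : ∏ i ∈ Finset.range n, μ (i : ℤ) ≠ 0 :=
    Finset.prod_ne_zero_iff.2 fun i hi => hpiv i (by have := Finset.mem_range.1 hi; omega)
  refine ⟨?_, ?_, ?_⟩
  · intro i hi hi'
    lift i to ℕ using hi
    exact hpiv i (by omega)
  · rw [hprev, hdet, Finset.prod_range_succ, mul_div_cancel_left₀ _ hprod]
    congr 1
    push_cast
    ring
  · rw [hdet, Finset.prod_ne_zero_iff]
    constructor
    · intro h i hi
      have := Finset.mem_range.1 hi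
      exact h i (by omega) (by omega)
    · intro h i hi hi'
      lift i to ℕ using hi
      exact h i (Finset.mem_range.2 (by omega))
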